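/- Fix g, n with 2g − 2 + n ≥ 1. Every connected stable weighted graph (Γ, w) of genus g with n labeled legs is (isomorphic to) a weighted contraction of (Γ₀, 0̲) for some connected 3-regular graph Γ₀ with n labeled legs and b₁(Γ₀) = g, where 0̲ is the identically-zero weight function. -/

import Mathlib

/-!
Every vertex `v` of the stable graph, of weight `w v` and valence `k`, is replaced by a connected
cubic graph of first Betti number `w v` whose legs are the `k` half-edges at `v` (a
`CubicBlock`); contracting all the edges inside the blocks recovers `(Γ, w)`.

Stability at `v` says exactly that `2 * w v + k ≥ 3`. This is what makes a block exist: take a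
trivalent tree with `2 * w v + k` legs, which is grown from a single vertex with three legs by
repeatedly splitting a leg (`CubicBlock.addLeg`), and glue `w v` disjoint pairs of its legs into
edges (`CubicBlock.join`).

The Betti numbers are obtained by counting half-edges: a graph with `n` legs has `n + 2 * |E|`
half-edges (`card_halfEdges`). Since `b1` is defined with truncated subtraction, the
computation for the blown-up graph also uses `|V| ≤ |E| + 1` for the connected graph `Γ`
(`card_V_le`).
-/

open scoped ENNReal NNReal Classical

/-- A combinatorial graph with `n` labeled legs: a finite nonempty set `V` of vertices, a
finite set `H` of half-edges, an involution `ι` on `H` whose fixed points are exactly the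
`n` labeled legs, and an endpoint map `ε : H → V`.  Edges are the pairs `{h, ι h}` with
`ι h ≠ h`. -/
structure LeggedGraph (n : ℕ) where
  V : Type
  H : Type
  finV : Finite V
  finH : Finite H
  neV : Nonempty V
  ι : H → H
  ι_invol : ∀ h, ι (ι h) = h
  ε : H → V
  leg : Fin n → H
  leg_fix : ∀ i, ι (leg i) = leg i
  leg_inj : Function.Injective leg
  fix_leg : ∀ h, ι h = h → ∃ i, leg i = h

attribute [instance] LeggedGraph.finV LeggedGraph.finH LeggedGraph.neV

namespace LeggedGraph

variable {n : ℕ}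

/-- The type of edges of `G`: unordered pairs `{h, ι h}` with `ι h ≠ h`. -/
def Edge (G : LeggedGraph n) : Type :=
  Quot (fun h h' : {h : G.H // G.ι h ≠ h} => (h' : G.H) = G.ι (h : G.H))

/-- The edge determined by a non-fixed half-edge. -/
def edgeMk (G : LeggedGraph n) (h : G.H) (hne : G.ι h ≠ h) : G.Edge := Quot.mk _ ⟨h, hne⟩

/-- The number of edges of `G`. -/
noncomputable def numEdges (G : LeggedGraph n) : ℕ := Nat.card G.Edge

/-- Two vertices are adjacent if they are the two endpoints of some edge. -/
def adjRel (G : LeggedGraph n) : G.V → G.V → Prop := fun v v' =>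
  ∃ h, G.ι h ≠ h ∧ G.ε h = v ∧ G.ε (G.ι h) = v'

/-- The number of connected components of `G`. -/
noncomputable def numComps (G : LeggedGraph n) : ℕ := Nat.card (Quot G.adjRel)

/-- `G` is connected: any two vertices can be joined by an edge path. -/
def IsConnected (G : LeggedGraph n) : Prop := ∀ v v' : G.V, Relation.EqvGen G.adjRel v v'

/-- The first Betti number `b₁(G) = |E(G)| − |V(G)| + c`, where `c` is the number of
connected components (stated as `|E(G)| + c − |V(G)|`, a natural number). -/
noncomputable def b1 (G : LeggedGraph n) : ℕ := G.numEdges + G.numComps - Nat.card G.V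

/-- The valence of a vertex: the number of half-edges based at it (a loop counts twice,
legs count once). -/
noncomputable def valence (G : LeggedGraph n) (v : G.V) : ℕ := Nat.card {h : G.H // G.ε h = v}

/-- `G` is 3-regular if every vertex has valence `3`. -/
def ThreeRegular (G : LeggedGraph n) : Prop := ∀ v, G.valence v = 3

/-- The genus of the weighted graph `(G, w)`: `b₁(G) + Σ_v w(v)`. -/
noncomputable def genus (G : LeggedGraph n) (w : G.V → ℕ) : ℕ := G.b1 + ∑ᶠ v, w v

/-- Stability of a weighted graph: every vertex of weight `0` has valence at least `3` and
every vertex of weight `1` has valence at least `1`. -/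
def Stable (G : LeggedGraph n) (w : G.V → ℕ) : Prop :=
  ∀ v, (w v = 0 → 3 ≤ G.valence v) ∧ (w v = 1 → 1 ≤ G.valence v)

/-- The set of half-edges of the edges meeting a set `S` of half-edges: this is the
set of half-edges of the edge set determined by `S` (legs and fixed half-edges are
discarded, and the set is closed under the involution). -/
def sym (G : LeggedGraph n) (S : Set G.H) : Set G.H :=
  {h | (h ∈ S ∨ G.ι h ∈ S) ∧ G.ι h ≠ h}

theorem sym_iota_mem {G : LeggedGraph n} {S : Set G.H} {h : G.H} (hh : h ∈ G.sym S) :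
    G.ι h ∈ G.sym S := by
  obtain ⟨h1, h2⟩ := hh
  constructor
  · rcases h1 with h1 | h1
    · right; rwa [G.ι_invol]
    · left; exact h1
  · rw [G.ι_invol]
    exact fun e => h2 e.symm

theorem sym_iota_not_mem {G : LeggedGraph n} {S : Set G.H} {h : G.H} (hh : h ∉ G.sym S) :
    G.ι h ∉ G.sym S := fun hc => by
  have h2 := sym_iota_mem hc
  rw [G.ι_invol] at h2
  exact hh h2

/-- The relation identifying the two endpoints of every edge in `S`. -/
def contrRel (G : LeggedGraph n) (S : Set G.H) : G.V → G.V → Prop := fun v v' =>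
  ∃ h ∈ G.sym S, G.ε h = v ∧ G.ε (G.ι h) = v'

/-- The contraction `Γ/S` of the set of edges `S`: its vertices are the connected
components of the graph obtained by removing all edges not in `S`, its half-edges are the
half-edges not belonging to `S`, and legs are kept. -/
def contract (G : LeggedGraph n) (S : Set G.H) : LeggedGraph n where
  V := Quot (G.contrRel S)
  H := {h : G.H // h ∉ G.sym S}
  finV := inferInstance
  finH := inferInstance
  neV := G.neV.map (Quot.mk _)
  ι := fun h => ⟨G.ι h.1, sym_iota_not_mem h.2⟩
  ι_invol := fun h => Subtype.ext (G.ι_invol h.1)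
  ε := fun h => Quot.mk _ (G.ε h.1)
  leg := fun i => ⟨G.leg i, fun hc => hc.2 (G.leg_fix i)⟩
  leg_fix := fun i => Subtype.ext (G.leg_fix i)
  leg_inj := fun i j hij => G.leg_inj (congrArg Subtype.val hij)
  fix_leg := fun h hh => by
    obtain ⟨i, hi⟩ := G.fix_leg h.1 (congrArg Subtype.val hh)
    exact ⟨i, Subtype.ext hi⟩

/-- The graph `Γ − T` obtained from `G` by keeping only the edges in `S` (and keeping all
vertices and all legs). -/
def restrict (G : LeggedGraph n) (S : Set G.H) : LeggedGraph n where
  V := G.V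
  H := {h : G.H // h ∈ G.sym S ∨ ∃ i, G.leg i = h}
  finV := G.finV
  finH := inferInstance
  neV := G.neV
  ι := fun h => ⟨G.ι h.1, by
    rcases h.2 with hm | ⟨i, hi⟩
    · exact Or.inl (sym_iota_mem hm)
    · refine Or.inr ⟨i, ?_⟩
      rw [← hi]
      exact (G.leg_fix i).symm⟩
  ι_invol := fun h => Subtype.ext (G.ι_invol h.1)
  ε := fun h => G.ε h.1
  leg := fun i => ⟨G.leg i, Or.inr ⟨i, rfl⟩⟩
  leg_fix := fun i => Subtype.ext (G.leg_fix i)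
  leg_inj := fun i j hij => G.leg_inj (congrArg Subtype.val hij)
  fix_leg := fun h hh => by
    rcases h.2 with hm | ⟨i, hi⟩
    · exact absurd (congrArg Subtype.val hh) hm.2
    · exact ⟨i, Subtype.ext hi⟩

/-- The subgraph of `Γ − T` lying over a vertex `x` of the contraction `Γ/S`
(the fiber `σ⁻¹(x)` of the contraction map `σ`), viewed as a graph without legs. -/
def fiber (G : LeggedGraph n) (S : Set G.H) (x : Quot (G.contrRel S)) : LeggedGraph 0 where
  V := {v : G.V // Quot.mk (G.contrRel S) v = x}
  H := {h : G.H // h ∈ G.sym S ∧ Quot.mk (G.contrRel S) (G.ε h) = x}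
  finV := inferInstance
  finH := inferInstance
  neV := by
    obtain ⟨v, hv⟩ := Quot.exists_rep x
    exact ⟨⟨v, hv⟩⟩
  ι := fun h => ⟨G.ι h.1, sym_iota_mem h.2.1, by
    have h2 : Quot.mk (G.contrRel S) (G.ε h.1) = Quot.mk (G.contrRel S) (G.ε (G.ι h.1)) :=
      Quot.sound ⟨h.1, h.2.1, rfl, rfl⟩
    rw [← h2]
    exact h.2.2⟩
  ι_invol := fun h => Subtype.ext (G.ι_invol h.1)
  ε := fun h => ⟨G.ε h.1, h.2.2⟩
  leg := Fin.elim0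
  leg_fix := fun i => i.elim0
  leg_inj := fun i => i.elim0
  fix_leg := fun h hh => absurd (congrArg Subtype.val hh) h.2.1.2

/-- The weight function `w/S` of the weighted contraction of `(G, w)`:
`w/S(x) = b₁(σ⁻¹(x)) + Σ_{v ∈ σ⁻¹(x)} w(v)`. -/
noncomputable def wcontract (G : LeggedGraph n) (w : G.V → ℕ) (S : Set G.H) :
    (G.contract S).V → ℕ := fun x =>
  (G.fiber S x).b1 + ∑ᶠ v : {v : G.V // Quot.mk (G.contrRel S) v = x}, w v.1

/-- Isomorphism of graphs with `n` labeled legs. -/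
def GIso (G G' : LeggedGraph n) : Prop :=
  ∃ (fV : G.V ≃ G'.V) (fH : G.H ≃ G'.H),
    (∀ h, fH (G.ι h) = G'.ι (fH h)) ∧
    (∀ h, fV (G.ε h) = G'.ε (fH h)) ∧
    (∀ i, fH (G.leg i) = G'.leg i)

/-- Isomorphism of weighted graphs with `n` labeled legs. -/
def WIso (G : LeggedGraph n) (w : G.V → ℕ) (G' : LeggedGraph n) (w' : G'.V → ℕ) : Prop :=
  ∃ (fV : G.V ≃ G'.V) (fH : G.H ≃ G'.H),
    (∀ h, fH (G.ι h) = G'.ι (fH h)) ∧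
    (∀ h, fV (G.ε h) = G'.ε (fH h)) ∧
    (∀ i, fH (G.leg i) = G'.leg i) ∧
    (∀ v, w' (fV v) = w v)

/-- Isomorphism of metric weighted graphs with `n` labeled legs (lengths take values in
`ℝ≥0 ∪ {∞}`, realized as `ℝ≥0∞`). -/
def MIso (G : LeggedGraph n) (w : G.V → ℕ) (l : G.H → ℝ≥0∞)
    (G' : LeggedGraph n) (w' : G'.V → ℕ) (l' : G'.H → ℝ≥0∞) : Prop :=
  ∃ (fV : G.V ≃ G'.V) (fH : G.H ≃ G'.H),
    (∀ h, fH (G.ι h) = G'.ι (fH h)) ∧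
    (∀ h, fV (G.ε h) = G'.ε (fH h)) ∧
    (∀ i, fH (G.leg i) = G'.leg i) ∧
    (∀ v, w' (fV v) = w v) ∧
    (∀ h, l' (fH h) = l h)

/-- `G'` is obtained from `G` by contracting exactly one edge, which is not a loop. -/
def OneEdgeContr (G G' : LeggedGraph n) : Prop :=
  ∃ h₀ : G.H, G.ι h₀ ≠ h₀ ∧ G.ε (G.ι h₀) ≠ G.ε h₀ ∧ GIso (G.contract {h₀}) G'

/-- `(G', w')` is obtained from `(G, w)` by the weighted contraction of exactly one edge. -/
def OneEdgeWContr (G : LeggedGraph n) (w : G.V → ℕ) (G' : LeggedGraph n)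
    (w' : G'.V → ℕ) : Prop :=
  ∃ h₀ : G.H, G.ι h₀ ≠ h₀ ∧ WIso (G.contract {h₀}) (G.wcontract w {h₀}) G' w'

/-- The set of half-edges of the edges given length `0` by a point `p` of the cone. -/
def zeroSet (G : LeggedGraph n) (p : G.Edge → ℝ≥0∞) : Set G.H :=
  {h | ∃ hne : G.ι h ≠ h, p (G.edgeMk h hne) = 0}

/-- The length function of the metric weighted graph associated to a point `p` of the
cone: each surviving edge `e` gets length `p e`, and each leg gets length `∞`. -/
noncomputable def assocLen (G : LeggedGraph n) (p : G.Edge → ℝ≥0∞)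
    (h : {h : G.H // h ∉ G.sym (G.zeroSet p)}) : ℝ≥0∞ :=
  if hne : G.ι h.1 = h.1 then ⊤ else p (G.edgeMk h.1 hne)

/-- `p ∼ q`: the metric weighted graphs associated to the points `p` and `q` are
isomorphic. -/
def ptRel (G : LeggedGraph n) (w : G.V → ℕ) (p q : G.Edge → ℝ≥0∞) : Prop :=
  MIso (G.contract (G.zeroSet p)) (G.wcontract w (G.zeroSet p)) (G.assocLen p)
       (G.contract (G.zeroSet q)) (G.wcontract w (G.zeroSet q)) (G.assocLen q)

/-- The equivalence on the closed cone `ℝ≥0^E`. -/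
def ptRelNN (G : LeggedGraph n) (w : G.V → ℕ) (p q : G.Edge → ℝ≥0) : Prop :=
  G.ptRel w (fun e => (p e : ℝ≥0∞)) (fun e => (q e : ℝ≥0∞))

end LeggedGraph


namespace LeggedGraph

variable {n : ℕ}

/-! ### Counting half-edges, edges and vertices -/

theorem eqvGen_map {α β : Type} {r : α → α → Prop} {s : β → β → Prop} (f : α → β)
    (hf : ∀ a b, r a b → Relation.EqvGen s (f a) (f b)) {a b : α} (h : Relation.EqvGen r a b) :
    Relation.EqvGen s (f a) (f b) := by
  induction h with
  | rel x y h => exact hf x y h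
  | refl x => exact .refl _
  | symm x y _ ih => exact .symm _ _ ih
  | trans x y z _ _ ih1 ih2 => exact .trans _ _ _ ih1 ih2

theorem edgeMk_eq_iff (G : LeggedGraph n) (x y : {h : G.H // G.ι h ≠ h}) :
    (Quot.mk _ x : G.Edge) = Quot.mk _ y ↔ (y = x ∨ (y : G.H) = G.ι x) := by
  constructor
  · intro h
    have h' := Quot.eqvGen_exact h
    clear h
    induction h' with
    | rel x y h => exact Or.inr h
    | refl x => exact Or.inl rfl
    | symm x y _ ih =>
      rcases ih with h | h
      · exact Or.inl h.symm
      · right; rw [h, G.ι_invol]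
    | trans x y z _ _ ih1 ih2 =>
      rcases ih1 with rfl | h1
      · exact ih2
      · rcases ih2 with rfl | h2
        · exact Or.inr h1
        · left; apply Subtype.ext; rw [h2, h1, G.ι_invol]
  · rintro (rfl | h)
    · rfl
    · exact Quot.sound h

instance (G : LeggedGraph n) : Finite G.Edge := by unfold Edge; infer_instance

/-- Each leg contributes one half-edge and each edge contributes two. -/
theorem card_halfEdges (G : LeggedGraph n) : Nat.card G.H = n + 2 * G.numEdges := by
  have := Fintype.ofFinite G.H
  have := Fintype.ofFinite G.Edge
  have h1 : Nat.card G.H = Nat.card {h : G.H // G.ι h = h} + Nat.card {h : G.H // G.ι h ≠ h} := by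
    rw [← Nat.card_sum]
    exact (Nat.card_congr (Equiv.sumCompl (fun h => G.ι h = h))).symm
  have h2 : Nat.card {h : G.H // G.ι h = h} = n := by
    have e : Fin n ≃ {h : G.H // G.ι h = h} :=
      Equiv.ofBijective (fun i => ⟨G.leg i, G.leg_fix i⟩)
        ⟨fun i j hij => G.leg_inj (congrArg Subtype.val hij), fun h => by
          obtain ⟨i, hi⟩ := G.fix_leg h.1 h.2
          exact ⟨i, Subtype.ext hi⟩⟩
    rw [← Nat.card_congr e, Nat.card_eq_fintype_card, Fintype.card_fin]
  have h3 : Nat.card {h : G.H // G.ι h ≠ h} = 2 * G.numEdges := by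
    let q : {h : G.H // G.ι h ≠ h} → G.Edge := Quot.mk _
    have := Finset.card_eq_sum_card_fiberwise (f := q)
      (s := Finset.univ) (t := Finset.univ) (fun _ _ => Finset.mem_coe.2 (Finset.mem_univ _))
    rw [Nat.card_eq_fintype_card, ← Finset.card_univ, this, numEdges, Nat.card_eq_fintype_card,
      Finset.sum_const_nat (m := 2), Finset.card_univ, mul_comm]
    intro e _
    obtain ⟨x, rfl⟩ := Quot.exists_rep e
    have hx : G.ι (G.ι x.1) ≠ G.ι x.1 := by
      rw [G.ι_invol]; exact fun h => x.2 h.symm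
    have : Finset.univ.filter (fun y => q y = Quot.mk _ x) = {x, ⟨G.ι x.1, hx⟩} := by
      ext y
      simp only [Finset.mem_filter, Finset.mem_univ, true_and, Finset.mem_insert,
        Finset.mem_singleton]
      exact eq_comm.trans ((edgeMk_eq_iff G x y).trans (or_congr_right
        ⟨fun h => Subtype.ext h, fun h => congrArg Subtype.val h⟩))
    rw [this, Finset.card_pair]
    intro h
    exact x.2 (congrArg Subtype.val h).symm
  omega

theorem numComps_eq_one (G : LeggedGraph n) (hG : G.IsConnected) : G.numComps = 1 := by
  rw [numComps, Nat.card_eq_one_iff_unique]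
  refine ⟨⟨fun x y => ?_⟩, ?_⟩
  · obtain ⟨a, rfl⟩ := Quot.exists_rep x
    obtain ⟨b, rfl⟩ := Quot.exists_rep y
    exact Quot.eqvGen_sound (hG a b)
  · exact G.neV.map (Quot.mk _)

/-- A connected graph satisfies `|V| ≤ |E| + 1`: discarding loops and parallel edges gives a
connected simple graph on the same vertices. -/
theorem card_V_le (G : LeggedGraph n) (hG : G.IsConnected) :
    Nat.card G.V ≤ G.numEdges + 1 := by
  let K : SimpleGraph G.V := SimpleGraph.fromRel G.adjRel
  have hK : K.Connected := by
    have := G.neV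
    refine SimpleGraph.Connected.mk fun u v => ?_
    induction hG u v with
    | rel x y h =>
      by_cases hxy : x = y
      · subst hxy; exact SimpleGraph.Reachable.refl _
      · exact SimpleGraph.Adj.reachable ((SimpleGraph.fromRel_adj _ _ _).2 ⟨hxy, Or.inl h⟩)
    | refl x => exact SimpleGraph.Reachable.refl _
    | symm x y _ ih => exact ih.symm
    | trans x y z _ _ ih1 ih2 => exact ih1.trans ih2
  have h1 := hK.card_vert_le_card_edgeSet_add_one
  have h2 : Nat.card K.edgeSet ≤ G.numEdges := by
    have hex : ∀ s : K.edgeSet, ∃ h : {h : G.H // G.ι h ≠ h},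
        s.1 = s(G.ε h.1, G.ε (G.ι h.1)) := by
      rintro ⟨s, hs⟩
      induction s with
      | h x y =>
        rw [SimpleGraph.mem_edgeSet, SimpleGraph.fromRel_adj] at hs
        rcases hs.2 with ⟨h, hne, rfl, rfl⟩ | ⟨h, hne, rfl, rfl⟩
        · exact ⟨⟨h, hne⟩, rfl⟩
        · exact ⟨⟨h, hne⟩, Sym2.eq_swap⟩
    choose f hf using hex
    refine Nat.card_le_card_of_injective (fun s => (Quot.mk _ (f s) : G.Edge)) ?_
    intro s t hst
    apply Subtype.ext
    rw [hf s, hf t]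
    rcases (edgeMk_eq_iff G _ _).1 hst with h | h
    · rw [h]
    · rw [h, G.ι_invol]; exact Sym2.eq_swap
  omega

/-! ### Cubic blocks -/

/-- A connected cubic graph with vertex set `P`, whose legs are indexed by `B` and attached by
`a`, with internal half-edges `I` paired by the fixed-point-free involution `τ`.
The last field says that `|I| / 2 - |P| + 1 = w`, i.e. that the first Betti number is `w`. -/
structure CubicBlock (B : Type) (w : ℕ) where
  P : Type
  I : Type
  finP : Finite P
  finI : Finite I
  neP : Nonempty P
  τ : I → I
  τ_invol : ∀ i, τ (τ i) = i
  τ_ne : ∀ i, τ i ≠ i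
  e : I → P
  a : B → P
  conn : ∀ p q : P, Relation.EqvGen (fun x y => ∃ i, e i = x ∧ e (τ i) = y) p q
  cubic : ∀ p, Nat.card {i // e i = p} + Nat.card {b // a b = p} = 3
  count : Nat.card I + 2 = 2 * w + 2 * Nat.card P

attribute [instance] CubicBlock.finP CubicBlock.finI CubicBlock.neP

/-- The indicator of a proposition; hiding the `if` keeps its decidability instance out of the
terms being rewritten. -/
noncomputable def ind (p : Prop) : ℕ := if p then 1 else 0

theorem ind_true : ind True = 1 := if_pos trivial

theorem ind_false : ind False = 0 := if_neg id

theorem card_fiber_eq_sum {X Y : Type} [Fintype X] (f : X → Y) (y : Y) :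
    Nat.card {x // f x = y} = ∑ x, ind (f x = y) := by
  unfold ind
  rw [Nat.card_eq_fintype_card, Fintype.card_subtype, Finset.card_filter]

/-- Relabelling of the legs of a block. -/
def CubicBlock.ofEquiv {B B' : Type} {w : ℕ} (f : B ≃ B') (T : CubicBlock B w) :
    CubicBlock B' w where
  __ := T
  a := fun b => T.a (f.symm b)
  cubic := fun p => by
    rw [← T.cubic p]
    congr 1
    exact Nat.card_congr (Equiv.subtypeEquiv f.symm (fun _ => Iff.rfl))

/-- One vertex with three legs. -/
def CubicBlock.tripod : CubicBlock (Fin 3) 0 where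
  P := Unit
  I := Empty
  finP := inferInstance
  finI := inferInstance
  neP := inferInstance
  τ := id
  τ_invol := fun _ => rfl
  τ_ne := fun i => i.elim
  e := fun i => i.elim
  a := fun _ => ()
  conn := fun p q => .refl _
  cubic := fun p => by simp
  count := by simp

/-- Splitting the leg `b₀`: a new vertex `none` carries the leg `b₀`, a new leg, and one end of
a new edge whose other end is the former endpoint of `b₀`. -/
noncomputable def CubicBlock.addLeg {B : Type} [Finite B] {w : ℕ} (T : CubicBlock B w) (b₀ : B) :
    CubicBlock (Option B) w where
  P := Option T.P
  I := T.I ⊕ Bool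
  finP := inferInstance
  finI := inferInstance
  neP := inferInstance
  τ := Sum.map T.τ not
  τ_invol := by
    rintro (i | b)
    · simp [T.τ_invol]
    · simp
  τ_ne := by
    rintro (i | b)
    · simpa using T.τ_ne i
    · simp
  e := Sum.elim (fun i => some (T.e i)) (fun b => if b then none else some (T.a b₀))
  a := fun o => o.elim none (fun b => if b = b₀ then none else some (T.a b))
  conn := by
    have key : ∀ q : T.P, Relation.EqvGen (fun x y => ∃ i : T.I ⊕ Bool,
        Sum.elim (fun i => some (T.e i)) (fun b => if b then none else some (T.a b₀)) i = x ∧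
        Sum.elim (fun i => some (T.e i)) (fun b => if b then none else some (T.a b₀))
          (Sum.map T.τ not i) = y) none (some q) := by
      intro q
      refine .trans _ (some (T.a b₀)) _ (.rel _ _ ⟨Sum.inr true, by simp, by simp⟩) ?_
      refine eqvGen_map some ?_ (T.conn (T.a b₀) q)
      rintro _ _ ⟨i, rfl, rfl⟩
      exact .rel _ _ ⟨Sum.inl i, rfl, rfl⟩
    have key' : ∀ q : Option T.P, Relation.EqvGen (fun x y => ∃ i : T.I ⊕ Bool,
        Sum.elim (fun i => some (T.e i)) (fun b => if b then none else some (T.a b₀)) i = x ∧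
        Sum.elim (fun i => some (T.e i)) (fun b => if b then none else some (T.a b₀))
          (Sum.map T.τ not i) = y) none q := by
      rintro (_ | q)
      · exact .refl _
      · exact key q
    exact fun p q => .trans _ _ _ (.symm _ _ (key' p)) (key' q)
  cubic := by
    have := Fintype.ofFinite B
    have := Fintype.ofFinite T.I
    rintro (_ | p)
    · rw [card_fiber_eq_sum, card_fiber_eq_sum, Fintype.sum_sum_type, Fintype.sum_option,
        Fintype.sum_eq_single b₀]
      · simp [ind_true, ind_false]
      · intro b hb
        simp [hb, ind_false]
    · have h := T.cubic p
      rw [card_fiber_eq_sum, card_fiber_eq_sum,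
        ← Finset.add_sum_erase Finset.univ (fun b => ind (T.a b = p)) (Finset.mem_univ b₀)] at h
      rw [card_fiber_eq_sum, card_fiber_eq_sum, Fintype.sum_sum_type, Fintype.sum_option,
        ← Finset.add_sum_erase Finset.univ (fun b : B => ind (_ = some p)) (Finset.mem_univ b₀)]
      have h3 : ∑ b ∈ Finset.univ.erase b₀,
          ind ((some b).elim none (fun b => if b = b₀ then none else some (T.a b)) = some p)
          = ∑ b ∈ Finset.univ.erase b₀, ind (T.a b = p) := by
        refine Finset.sum_congr rfl fun b hb => ?_
        simp [Finset.ne_of_mem_erase hb]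
      rw [h3]
      simp [ind_false]
      omega
  count := by
    have := T.count
    rw [Nat.card_sum, Finite.card_option]
    simp only [Nat.card_eq_fintype_card (α := Bool), Fintype.card_bool]
    omega

/-- Gluing `w` disjoint pairs of legs of a tree into edges raises the first Betti number
to `w`. -/
noncomputable def CubicBlock.join {B : Type} [Finite B] {w : ℕ}
    (T : CubicBlock (B ⊕ Fin w × Bool) 0) : CubicBlock B w where
  P := T.P
  I := T.I ⊕ Fin w × Bool
  finP := inferInstance
  finI := inferInstance
  neP := inferInstance
  τ := Sum.map T.τ (Prod.map id not)
  τ_invol := by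
    rintro (i | b)
    · simp [T.τ_invol]
    · simp [Prod.ext_iff]
  τ_ne := by
    rintro (i | b)
    · simpa using T.τ_ne i
    · simp [Prod.ext_iff]
  e := Sum.elim T.e (fun b => T.a (Sum.inr b))
  a := fun b => T.a (Sum.inl b)
  conn := fun p q => by
    refine eqvGen_map id ?_ (T.conn p q)
    rintro _ _ ⟨i, rfl, rfl⟩
    exact .rel _ _ ⟨Sum.inl i, rfl, rfl⟩
  cubic := fun p => by
    have := Fintype.ofFinite B
    have := Fintype.ofFinite T.I
    rw [← T.cubic p]
    simp only [card_fiber_eq_sum, Fintype.sum_sum_type, Sum.elim_inl, Sum.elim_inr]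
    ring
  count := by
    have := T.count
    rw [Nat.card_sum]
    simp only [Nat.card_prod, Nat.card_eq_fintype_card (α := Bool), Nat.card_fin,
      Fintype.card_bool]
    omega

theorem exists_tree (m : ℕ) (hm : 3 ≤ m) : Nonempty (CubicBlock (Fin m) 0) := by
  induction m, hm using Nat.le_induction with
  | base => exact ⟨CubicBlock.tripod⟩
  | succ m hm ih =>
    obtain ⟨T⟩ := ih
    exact ⟨(T.addLeg ⟨0, by omega⟩).ofEquiv (finSuccEquiv m).symm⟩

theorem exists_cubicBlock (B : Type) [Finite B] (w : ℕ) (h : 3 ≤ Nat.card B + 2 * w) :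
    Nonempty (CubicBlock B w) := by
  obtain ⟨T⟩ := exists_tree _ h
  have e : Fin (Nat.card B + 2 * w) ≃ B ⊕ Fin w × Bool := by
    refine (Finite.equivFinOfCardEq ?_).symm
    rw [Nat.card_sum]
    simp [mul_comm]
  exact ⟨(T.ofEquiv e).join⟩

/-! ### Blowing up vertices into cubic blocks -/

section BlowUp

variable (G : LeggedGraph n) {w : G.V → ℕ}
  (T : ∀ v : G.V, CubicBlock {h : G.H // G.ε h = v} (w v))

/-- The graph obtained from `G` by replacing each vertex `v` by the block `T v`: a half-edge of
`G` at `v` becomes the corresponding leg of `T v`. -/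
def blowUp : LeggedGraph n where
  V := Σ v, (T v).P
  H := G.H ⊕ Σ v, (T v).I
  finV := inferInstance
  finH := inferInstance
  neV := by
    obtain ⟨v⟩ := G.neV
    obtain ⟨p⟩ := (T v).neP
    exact ⟨⟨v, p⟩⟩
  ι := Sum.map G.ι (fun i => ⟨i.1, (T i.1).τ i.2⟩)
  ι_invol := by
    rintro (h | ⟨v, i⟩)
    · simp [G.ι_invol]
    · simp [(T v).τ_invol]
  ε := Sum.elim (fun h => ⟨G.ε h, (T (G.ε h)).a ⟨h, rfl⟩⟩) (fun i => ⟨i.1, (T i.1).e i.2⟩)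
  leg := fun i => Sum.inl (G.leg i)
  leg_fix := fun i => by simp [G.leg_fix]
  leg_inj := fun i j h => G.leg_inj (Sum.inl_injective h)
  fix_leg := by
    rintro (h | ⟨v, i⟩) hh
    · obtain ⟨i, hi⟩ := G.fix_leg h (Sum.inl_injective hh)
      exact ⟨i, congrArg _ hi⟩
    · simp [(T v).τ_ne] at hh

/-- The half-edges lying inside the blocks. -/
def innerSet : Set (G.blowUp T).H := Set.range Sum.inr

theorem mem_sym_inner (h : (G.blowUp T).H) :
    h ∈ (G.blowUp T).sym (G.innerSet T) ↔ h ∈ Set.range (Sum.inr : _ → G.H ⊕ Σ v, (T v).I) := by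
  constructor
  · rintro ⟨h1 | h1, -⟩
    · exact h1
    · rcases h with h | i
      · obtain ⟨j, hj⟩ := h1
        cases hj
      · exact ⟨i, rfl⟩
  · rintro ⟨⟨v, i⟩, rfl⟩
    refine ⟨Or.inl ⟨_, rfl⟩, fun h => ?_⟩
    have := Sum.inr_injective h
    simp [(T v).τ_ne] at this

/-- Any two vertices of one block are identified by contracting the inner edges. -/
theorem eqvGen_block (v : G.V) (p q : (T v).P) :
    Relation.EqvGen ((G.blowUp T).contrRel (G.innerSet T)) ⟨v, p⟩ ⟨v, q⟩ := by
  refine eqvGen_map (fun p => (⟨v, p⟩ : Σ v, (T v).P)) ?_ ((T v).conn p q)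
  rintro _ _ ⟨i, rfl, rfl⟩
  exact .rel _ _ ⟨Sum.inr ⟨v, i⟩, (mem_sym_inner G T _).2 ⟨_, rfl⟩, rfl, rfl⟩

theorem contrRel_fst {x y : (G.blowUp T).V}
    (h : (G.blowUp T).contrRel (G.innerSet T) x y) : x.1 = y.1 := by
  obtain ⟨h, hh, rfl, rfl⟩ := h
  obtain ⟨i, rfl⟩ := (mem_sym_inner G T _).1 hh
  rfl

theorem mk_eq_iff (x y : (G.blowUp T).V) :
    Quot.mk ((G.blowUp T).contrRel (G.innerSet T)) x = Quot.mk _ y ↔ x.1 = y.1 := by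
  constructor
  · intro h
    exact congrArg (Quot.lift (fun x : (G.blowUp T).V => x.1) fun _ _ => contrRel_fst G T) h
  · obtain ⟨v, p⟩ := x
    obtain ⟨v', q⟩ := y
    rintro ⟨⟩
    exact Quot.eqvGen_sound (eqvGen_block G T v p q)

theorem blowUp_connected (hG : G.IsConnected) : (G.blowUp T).IsConnected := by
  have hblock : ∀ v (p q : (T v).P),
      Relation.EqvGen (G.blowUp T).adjRel ⟨v, p⟩ ⟨v, q⟩ := fun v p q =>
    eqvGen_map id (fun _ _ ⟨h, hh, h1, h2⟩ => .rel _ _ ⟨h, hh.2, h1, h2⟩)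
      (eqvGen_block G T v p q)
  let c : ∀ v, (T v).P := fun v => Classical.choice (T v).neP
  have hc : ∀ v v', Relation.EqvGen (G.blowUp T).adjRel ⟨v, c v⟩ ⟨v', c v'⟩ := fun v v' => by
    refine eqvGen_map (fun v => (⟨v, c v⟩ : Σ v, (T v).P)) ?_ (hG v v')
    rintro _ _ ⟨h, hne, rfl, rfl⟩
    refine .trans _ _ _ (hblock _ _ ((T (G.ε h)).a ⟨h, rfl⟩)) (.trans _ _ _ (.rel _ _ ?_)
      (hblock _ ((T (G.ε (G.ι h))).a ⟨G.ι h, rfl⟩) _))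
    exact ⟨Sum.inl h, fun e => hne (Sum.inl_injective e), rfl, rfl⟩
  rintro ⟨v, p⟩ ⟨v', q⟩
  exact .trans _ _ _ (hblock v p (c v)) (.trans _ _ _ (hc v v') (hblock v' (c v') q))

theorem blowUp_threeRegular : (G.blowUp T).ThreeRegular := by
  rintro ⟨v, p⟩
  change Nat.card {h : (G.blowUp T).H // (G.blowUp T).ε h = ⟨v, p⟩} = 3
  have hleg : ∀ b : {b // (T v).a b = p}, (G.blowUp T).ε (Sum.inl b.1.1) = ⟨v, p⟩ := by
    rintro ⟨⟨h, rfl⟩, rfl⟩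
    rfl
  have hinner : ∀ i : {i // (T v).e i = p}, (G.blowUp T).ε (Sum.inr ⟨v, i.1⟩) = ⟨v, p⟩ := by
    rintro ⟨i, rfl⟩
    rfl
  rw [← (T v).cubic p, add_comm, ← Nat.card_sum]
  refine (Nat.card_congr (Equiv.ofBijective (Sum.elim
    (fun b => ⟨Sum.inl b.1.1, hleg b⟩) (fun i => ⟨Sum.inr ⟨v, i.1⟩, hinner i⟩))
    ⟨?_, ?_⟩)).symm
  · rintro (⟨⟨h, hv⟩, hp⟩ | ⟨i, hi⟩) (⟨⟨h', hv'⟩, hp'⟩ | ⟨i', hi'⟩) hh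
    · have := Sum.inl_injective (congrArg Subtype.val hh)
      subst this
      rfl
    · cases congrArg Subtype.val hh
    · cases congrArg Subtype.val hh
    · have := Sum.inr_injective (congrArg Subtype.val hh)
      have := eq_of_heq (Sigma.mk.inj this).2
      subst this
      rfl
  · rintro ⟨h | ⟨v', i⟩, hh⟩
    · have h1 : G.ε h = v := congrArg Sigma.fst hh
      subst h1
      have h2 := eq_of_heq (Sigma.mk.inj hh).2
      exact ⟨Sum.inl ⟨⟨h, rfl⟩, h2⟩, rfl⟩
    · have h1 : v' = v := congrArg Sigma.fst hh
      subst h1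
      have h2 := eq_of_heq (Sigma.mk.inj hh).2
      exact ⟨Sum.inr ⟨i, h2⟩, rfl⟩

theorem blowUp_b1 (hG : G.IsConnected) : (G.blowUp T).b1 = G.genus w := by
  have := Fintype.ofFinite G.V
  have h1 := card_halfEdges (G.blowUp T)
  have h2 := card_halfEdges G
  have h3 := card_V_le G hG
  have hH : Nat.card (G.blowUp T).H = Nat.card G.H + ∑ v, Nat.card (T v).I := by
    rw [← Nat.card_sigma, ← Nat.card_sum]
    rfl
  have hV : Nat.card (G.blowUp T).V = ∑ v, Nat.card (T v).P := by
    rw [← Nat.card_sigma]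
    rfl
  have hS : ∑ v, Nat.card (T v).I + 2 * Nat.card G.V =
      2 * ∑ v, w v + 2 * ∑ v, Nat.card (T v).P := by
    have := Finset.sum_congr (rfl : (Finset.univ : Finset G.V) = Finset.univ)
      fun v _ => (T v).count
    rw [Finset.sum_add_distrib, Finset.sum_add_distrib, ← Finset.mul_sum, ← Finset.mul_sum,
      Finset.sum_const, Finset.card_univ, ← Nat.card_eq_fintype_card, smul_eq_mul] at this
    omega
  rw [genus, b1, b1, numComps_eq_one _ hG, numComps_eq_one _ (blowUp_connected G T hG),
    finsum_eq_sum_of_fintype]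
  omega

/-- The part of the blow-up over `v` is the block `T v`, so its first Betti number is `w v`. -/
theorem fiber_b1 (v : G.V) (p : (T v).P) :
    ((G.blowUp T).fiber (G.innerSet T) (Quot.mk _ ⟨v, p⟩)).b1 = w v := by
  set F := (G.blowUp T).fiber (G.innerSet T) (Quot.mk _ ⟨v, p⟩) with hF
  let f : (T v).P → F.V := fun q => ⟨⟨v, q⟩, (mk_eq_iff G T _ _).2 rfl⟩
  have hf : Function.Bijective f := by
    constructor
    · intro q q' h
      exact eq_of_heq (Sigma.mk.inj (congrArg Subtype.val h)).2
    · rintro ⟨⟨v', q⟩, hq⟩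
      obtain rfl : v' = v := (mk_eq_iff G T _ _).1 hq
      exact ⟨q, rfl⟩
  let k : (T v).I → F.H := fun i =>
    ⟨Sum.inr ⟨v, i⟩, (mem_sym_inner G T _).2 ⟨_, rfl⟩, (mk_eq_iff G T _ _).2 rfl⟩
  have hk : Function.Bijective k := by
    constructor
    · intro q q' h
      exact eq_of_heq (Sigma.mk.inj (Sum.inr_injective (congrArg Subtype.val h))).2
    · rintro ⟨h, hh, hq⟩
      obtain ⟨⟨v', i⟩, rfl⟩ := (mem_sym_inner G T _).1 hh
      obtain rfl : v' = v := (mk_eq_iff G T _ _).1 hq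
      exact ⟨i, rfl⟩
  have hconn : F.IsConnected := by
    intro x y
    obtain ⟨q, rfl⟩ := hf.2 x
    obtain ⟨q', rfl⟩ := hf.2 y
    refine eqvGen_map f ?_ ((T v).conn q q')
    rintro _ _ ⟨i, rfl, rfl⟩
    exact .rel _ _ ⟨k i, fun e => (T v).τ_ne i (hk.1 e), rfl, rfl⟩
  have h1 := card_halfEdges F
  have h2 := Nat.card_congr (Equiv.ofBijective f hf)
  have h3 := Nat.card_congr (Equiv.ofBijective k hk)
  have h4 := (T v).count
  rw [b1, numComps_eq_one _ hconn]
  omega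

theorem contract_blowUp :
    WIso ((G.blowUp T).contract (G.innerSet T))
      ((G.blowUp T).wcontract (fun _ => 0) (G.innerSet T)) G w := by
  let fV : ((G.blowUp T).contract (G.innerSet T)).V ≃ G.V := Equiv.ofBijective
    (Quot.lift (fun x : (G.blowUp T).V => x.1) fun _ _ => contrRel_fst G T) <| by
      constructor
      · intro x y h
        obtain ⟨a, rfl⟩ := Quot.exists_rep x
        obtain ⟨b, rfl⟩ := Quot.exists_rep y
        exact (mk_eq_iff G T a b).2 h
      · intro v
        obtain ⟨p⟩ := (T v).neP
        exact ⟨Quot.mk _ ⟨v, p⟩, rfl⟩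
  have hinl : ∀ h : G.H, (Sum.inl h : G.H ⊕ Σ v, (T v).I) ∉
      (G.blowUp T).sym (G.innerSet T) := fun h hh => by
    obtain ⟨i, hi⟩ := (mem_sym_inner G T _).1 hh
    cases hi
  let e : G.H ≃ ((G.blowUp T).contract (G.innerSet T)).H := Equiv.ofBijective
    (fun h => ⟨Sum.inl h, hinl h⟩) <| by
      constructor
      · intro h h' e
        exact Sum.inl_injective (congrArg Subtype.val e)
      · rintro ⟨h | i, hh⟩
        · exact ⟨h, rfl⟩
        · exact absurd ((mem_sym_inner G T _).2 ⟨i, rfl⟩) hh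
  refine ⟨fV, e.symm, fun h => ?_, fun h => ?_, fun i => ?_, fun x => ?_⟩
  · obtain ⟨h, rfl⟩ := e.surjective h
    exact (e.symm_apply_apply (G.ι h)).trans (congrArg G.ι (e.symm_apply_apply h).symm)
  · obtain ⟨h, rfl⟩ := e.surjective h
    exact congrArg G.ε (e.symm_apply_apply h).symm
  · exact e.symm_apply_apply (G.leg i)
  · obtain ⟨⟨v, p⟩, rfl⟩ := Quot.exists_rep x
    have h := fiber_b1 G T v p
    unfold wcontract
    rw [finsum_zero, add_zero]
    exact h.symm

end BlowUp

end LeggedGraph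

open LeggedGraph

theorem stmt_6 (g n : ℕ) (hgn : 1 ≤ 2 * (g : ℤ) - 2 + n) (G : LeggedGraph n)
    (w : G.V → ℕ) (hconn : G.IsConnected) (hstab : G.Stable w) (hgen : G.genus w = g) :
    ∃ (G₀ : LeggedGraph n) (S : Set G₀.H),
      G₀.IsConnected ∧ G₀.ThreeRegular ∧ G₀.b1 = g ∧
      WIso (G₀.contract S) (G₀.wcontract (fun _ => 0) S) G w := by
  have hT : ∀ v : G.V, Nonempty (CubicBlock {h : G.H // G.ε h = v} (w v)) := fun v => by
    apply exists_cubicBlock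
    obtain ⟨h0, h1⟩ := hstab v
    unfold valence at h0 h1
    omega
  let T := fun v => Classical.choice (hT v)
  exact ⟨G.blowUp T, G.innerSet T, blowUp_connected G T hconn, blowUp_threeRegular G T,
    (blowUp_b1 G T hconn).trans hgen, contract_blowUp G T⟩
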